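/- Main error estimate: if f has an absolutely continuous (r-1)st derivative on [-1,1] with f^{(r-1)}(t) = f^{(r-1)}(-1) + ∫_{-1}^t g(y) dy for an absolutely integrable g of bounded variation V = Var(g) < ∞, then for n ≥ r+1 the Lagrange interpolant at any n distinct nodes in [-1,1] satisfies ‖f - L_n[f]‖_∞ ≤ π^r V / ((n-1)(n-2)···(n-r)) · max_{1≤j≤n} ‖ℓ_j‖_∞. -/

import Mathlib

open Finset MeasureTheory

/-- The `k`-th Lagrange basis polynomial for nodes `x : Fin n → ℝ`. -/
noncomputable def lagBasis {n : ℕ} (x : Fin n → ℝ) (k : Fin n) (t : ℝ) : ℝ :=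
  ∏ j ∈ Finset.univ.erase k, (t - x j) / (x k - x j)

/-- The Lagrange interpolant `L_n[f]`. -/
noncomputable def lagInterp {n : ℕ} (x : Fin n → ℝ) (f : ℝ → ℝ) (t : ℝ) : ℝ :=
  ∑ k, f (x k) * lagBasis x k t

/-- The antiderivative `u ↦ ∫_u^1 K` of `-K` that vanishes at `1`. -/
noncomputable def tailIntegral (K : ℝ → ℝ) (u : ℝ) : ℝ := ∫ t in u..1, K t

lemma intervalIntegrable_of_mem_Icc {K : ℝ → ℝ} (hK : IntervalIntegrable K volume (-1) 1)
    {a b : ℝ} (ha : a ∈ Set.Icc (-1 : ℝ) 1) (hb : b ∈ Set.Icc (-1 : ℝ) 1) :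
    IntervalIntegrable K volume a b := by
  apply hK.mono_set
  rw [Set.uIcc_of_le (by norm_num : (-1 : ℝ) ≤ 1)]
  exact Set.uIcc_subset_Icc ha hb

lemma tailIntegral_sub {K : ℝ → ℝ} (hK : IntervalIntegrable K volume (-1) 1)
    {a b : ℝ} (ha : a ∈ Set.Icc (-1 : ℝ) 1) (hb : b ∈ Set.Icc (-1 : ℝ) 1) :
    tailIntegral K a - tailIntegral K b = ∫ t in a..b, K t := by
  have h1 : (1 : ℝ) ∈ Set.Icc (-1 : ℝ) 1 := by norm_num
  unfold tailIntegral
  rw [← intervalIntegral.integral_add_adjacent_intervals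
    (intervalIntegrable_of_mem_Icc hK ha hb) (intervalIntegrable_of_mem_Icc hK hb h1)]
  ring

lemma abs_tailIntegral_sub_le {K : ℝ → ℝ} (hK : IntervalIntegrable K volume (-1) 1) {M : ℝ}
    (hM : ∀ t ∈ Set.Icc (-1 : ℝ) 1, |K t| ≤ M)
    {a b : ℝ} (ha : a ∈ Set.Icc (-1 : ℝ) 1) (hb : b ∈ Set.Icc (-1 : ℝ) 1) :
    |tailIntegral K a - tailIntegral K b| ≤ M * |a - b| := by
  rw [tailIntegral_sub hK ha hb, abs_sub_comm a b, ← Real.norm_eq_abs (∫ t in a..b, K t)]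
  apply intervalIntegral.norm_integral_le_of_norm_le_const
  intro t ht
  exact hM t (Set.uIcc_subset_Icc ha hb (Set.uIoc_subset_uIcc ht))

lemma tailIntegral_one (K : ℝ → ℝ) : tailIntegral K 1 = 0 := by simp [tailIntegral]

lemma continuousOn_tailIntegral {K : ℝ → ℝ} (hK : IntervalIntegrable K volume (-1) 1) :
    ContinuousOn (tailIntegral K) (Set.Icc (-1 : ℝ) 1) := by
  have h := intervalIntegral.continuousOn_primitive_interval' hK (a := 1) (by simp)
  rw [Set.uIcc_of_le (by norm_num : (-1 : ℝ) ≤ 1)] at h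
  refine h.neg.congr fun u _ => ?_
  simp only [tailIntegral, Pi.neg_apply]
  rw [intervalIntegral.integral_symm]

lemma intervalIntegrable_tailIntegral {K : ℝ → ℝ} (hK : IntervalIntegrable K volume (-1) 1) :
    IntervalIntegrable (tailIntegral K) volume (-1) 1 := by
  apply ContinuousOn.intervalIntegrable
  rw [Set.uIcc_of_le (by norm_num : (-1 : ℝ) ≤ 1)]
  exact continuousOn_tailIntegral hK

/-- Integration by parts against a mean-zero kernel. -/
lemma integral_mul_eq_integral_mul_tailIntegral {h g K : ℝ → ℝ}
    (hg : IntervalIntegrable g volume (-1) 1) (hK : IntervalIntegrable K volume (-1) 1)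
    (hh : ∀ t ∈ Set.Icc (-1 : ℝ) 1, h t = h (-1) + ∫ y in (-1 : ℝ)..t, g y)
    (h0 : ∫ t in (-1 : ℝ)..1, K t = 0) :
    ∫ t in (-1 : ℝ)..1, h t * K t = ∫ t in (-1 : ℝ)..1, g t * tailIntegral K t := by
  have hle : (-1 : ℝ) ≤ 1 := by norm_num
  have hG := hg.absolutelyContinuousOnInterval_intervalIntegral (c := -1) (by simp)
  have hT := hK.absolutelyContinuousOnInterval_intervalIntegral (c := -1) (by simp)
  have key := hG.integral_mul_deriv_eq_deriv_mul hT
  have e1 : ∫ t in (-1 : ℝ)..1, (∫ y in (-1 : ℝ)..t, g y) * deriv (fun x => ∫ y in (-1 : ℝ)..x, K y) t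
      = ∫ t in (-1 : ℝ)..1, (h t * K t - h (-1) * K t) := by
    apply intervalIntegral.integral_congr_ae
    filter_upwards [hK.ae_hasDerivAt_integral] with t ht htm
    have htm' := Set.uIoc_subset_uIcc htm
    rw [(ht htm' (-1) (by simp)).deriv, hh t (by rwa [Set.uIcc_of_le hle] at htm')]
    ring
  have e2 : ∫ t in (-1 : ℝ)..1, deriv (fun x => ∫ y in (-1 : ℝ)..x, g y) t * (∫ y in (-1 : ℝ)..t, K y)
      = ∫ t in (-1 : ℝ)..1, -(g t * tailIntegral K t) := by
    apply intervalIntegral.integral_congr_ae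
    filter_upwards [hg.ae_hasDerivAt_integral] with t ht htm
    have htm' := Set.uIoc_subset_uIcc htm
    have htI : t ∈ Set.Icc (-1 : ℝ) 1 := by rwa [Set.uIcc_of_le hle] at htm'
    rw [(ht htm' (-1) (by simp)).deriv]
    have := tailIntegral_sub hK (a := -1) (by simp) htI
    have h3 : tailIntegral K (-1) = 0 := h0
    rw [← this, h3]
    ring
  have hhc : ContinuousOn h (Set.uIcc (-1 : ℝ) 1) := by
    have hc := intervalIntegral.continuousOn_primitive_interval' hg (a := -1) (by simp)
    refine (hc.const_add (h (-1))).congr fun u hu => ?_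
    rw [Set.uIcc_of_le hle] at hu
    exact hh u hu
  rw [e1, e2, intervalIntegral.integral_sub (hK.continuousOn_mul hhc) (hK.const_mul _),
    intervalIntegral.integral_const_mul, h0, intervalIntegral.integral_neg] at key
  simpa using key

lemma sum_mul_sub_succ (a b : ℕ → ℝ) (N : ℕ) :
    ∑ i ∈ range N, a i * (b i - b (i + 1)) =
      ∑ i ∈ range N, (a (i + 1) - a i) * b (i + 1) + a 0 * b 0 - a N * b N := by
  induction N with
  | zero => simp
  | succ N ih => rw [sum_range_succ, sum_range_succ, ih]; ring

/-- A form of the second mean value theorem for mean-zero kernels. -/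
lemma abs_integral_mul_le_of_boundedVariationOn {g K : ℝ → ℝ} {C M : ℝ}
    (hg : IntervalIntegrable g volume (-1) 1)
    (hBV : BoundedVariationOn g (Set.Icc (-1 : ℝ) 1))
    (hK : IntervalIntegrable K volume (-1) 1)
    (hM : ∀ t ∈ Set.Icc (-1 : ℝ) 1, |K t| ≤ M)
    (hC : ∀ t ∈ Set.Icc (-1 : ℝ) 1, |tailIntegral K t| ≤ C)
    (h0 : ∫ t in (-1 : ℝ)..1, K t = 0) :
    |∫ t in (-1 : ℝ)..1, g t * K t| ≤ C * (eVariationOn g (Set.Icc (-1 : ℝ) 1)).toReal := by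
  have hle : (-1 : ℝ) ≤ 1 := by norm_num
  have hm1 : (-1 : ℝ) ∈ Set.Icc (-1 : ℝ) 1 := by norm_num
  set V := (eVariationOn g (Set.Icc (-1 : ℝ) 1)).toReal with hV
  have hM0 : 0 ≤ M := (abs_nonneg _).trans (hM _ hm1)
  have hV0 : 0 ≤ V := ENNReal.toReal_nonneg
  set v := variationOnFromTo g (Set.Icc (-1 : ℝ) 1) (-1) with hv
  have hloc := hBV.locallyBoundedVariationOn
  have hv0 : v (-1) = 0 := variationOnFromTo.self _ _ _
  have hv1 : v 1 = V := by
    rw [hv, variationOnFromTo.eq_of_le _ _ hle, Set.inter_self]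
  have hgv : ∀ a ∈ Set.Icc (-1 : ℝ) 1, ∀ b ∈ Set.Icc (-1 : ℝ) 1, a ≤ b →
      |g b - g a| ≤ v b - v a := by
    intro a ha b hb hab
    have h1 := variationOnFromTo.add hloc hm1 ha hb
    have h3 : |g b - g a| ≤ variationOnFromTo g (Set.Icc (-1 : ℝ) 1) a b := by
      rw [variationOnFromTo.eq_of_le _ _ hab, ← Real.dist_eq, dist_edist]
      apply ENNReal.toReal_mono (hloc a b ha hb)
      exact eVariationOn.edist_le g ⟨hb, hab, le_rfl⟩ ⟨ha, le_rfl, hab⟩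
    linarith
  have hvm : ∀ a ∈ Set.Icc (-1 : ℝ) 1, ∀ b ∈ Set.Icc (-1 : ℝ) 1, a ≤ b → v a ≤ v b := 
    fun a ha b hb hab => by linarith [(abs_nonneg _).trans (hgv a ha b hb hab)]
  have hgK : IntervalIntegrable (fun t => g t * K t) volume (-1) 1 := by
    rw [intervalIntegrable_iff_integrableOn_Ioc_of_le hle] at hg hK ⊢
    refine Integrable.mul_bdd (c := M) hg hK.aestronglyMeasurable ?_
    refine (ae_restrict_iff' measurableSet_Ioc).2 (Filter.Eventually.of_forall fun t ht => ?_)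
    exact hM t ⟨ht.1.le, ht.2⟩
  have main : ∀ N : ℕ, 0 < N →
      |∫ t in (-1 : ℝ)..1, g t * K t| ≤ C * V + M * V * (2 / N) := by
    intro N hN
    have hN' : (0 : ℝ) < N := by exact_mod_cast hN
    set a : ℕ → ℝ := fun i => -1 + 2 / N * i with ha
    have ha0 : a 0 = -1 := by simp [ha]
    have haN : a N = 1 := by simp only [ha]; field_simp; norm_num
    have hd : ∀ i, a (i + 1) - a i = 2 / N := fun i => by simp only [ha]; push_cast; ring
    have hstep : ∀ i, a i ≤ a (i + 1) := fun i => by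
      have := hd i
      have : (0 : ℝ) < 2 / N := by positivity
      linarith
    have hmono : Monotone a := monotone_nat_of_le_succ hstep
    have hmem : ∀ i ≤ N, a i ∈ Set.Icc (-1 : ℝ) 1 := fun i hi =>
      ⟨ha0 ▸ hmono (Nat.zero_le i), haN ▸ hmono hi⟩
    have htel : ∑ i ∈ range N, (v (a (i + 1)) - v (a i)) = V := by
      rw [sum_range_sub (fun i => v (a i)), ha0, haN, hv0, hv1, sub_zero]
    have hsplit : ∫ t in (-1 : ℝ)..1, g t * K t =
        ∑ i ∈ range N, ∫ t in (a i)..(a (i + 1)), g t * K t := by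
      rw [intervalIntegral.sum_integral_adjacent_intervals, ha0, haN]
      intro i hi
      exact intervalIntegrable_of_mem_Icc hgK (hmem i hi.le) (hmem _ hi)
    have hblock : ∀ i ∈ range N, ∫ t in (a i)..(a (i + 1)), g t * K t =
        g (a i) * (tailIntegral K (a i) - tailIntegral K (a (i + 1))) +
          ∫ t in (a i)..(a (i + 1)), (g t - g (a i)) * K t := by
      intro i hi
      have hi' := mem_range.1 hi
      rw [tailIntegral_sub hK (hmem i hi'.le) (hmem _ hi'),
        ← intervalIntegral.integral_const_mul]
      have h1 := intervalIntegrable_of_mem_Icc hgK (hmem i hi'.le) (hmem _ hi')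
      have h2 := (intervalIntegrable_of_mem_Icc hK (hmem i hi'.le) (hmem _ hi')).const_mul (g (a i))
      simp_rw [sub_mul]
      rw [intervalIntegral.integral_sub h1 h2]
      ring
    have hrem : ∀ i ∈ range N, |∫ t in (a i)..(a (i + 1)), (g t - g (a i)) * K t| ≤
        (v (a (i + 1)) - v (a i)) * M * (2 / N) := by
      intro i hi
      have hi' := mem_range.1 hi
      have := intervalIntegral.norm_integral_le_of_norm_le_const (a := a i) (b := a (i + 1))
        (f := fun t => (g t - g (a i)) * K t) (C := (v (a (i + 1)) - v (a i)) * M) ?_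
      · rwa [hd, abs_of_pos (by positivity : (0 : ℝ) < 2 / N)] at this
      intro t ht
      rw [Set.uIoc_of_le (hstep i)] at ht
      have htm : t ∈ Set.Icc (-1 : ℝ) 1 :=
        ⟨(hmem i hi'.le).1.trans ht.1.le, ht.2.trans (hmem _ hi').2⟩
      rw [Real.norm_eq_abs, abs_mul]
      have h1 := hgv _ (hmem i hi'.le) t htm ht.1.le
      have h2 := hvm t htm _ (hmem _ hi') ht.2
      exact mul_le_mul (by linarith) (hM t htm) (abs_nonneg _) (by linarith [abs_nonneg (g t - g (a i))])
    rw [hsplit, sum_congr rfl hblock, sum_add_distrib]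
    have h1 : |∑ i ∈ range N, ∫ t in (a i)..(a (i + 1)), (g t - g (a i)) * K t| ≤ M * V * (2 / N) := by
      refine (abs_sum_le_sum_abs _ _).trans ((sum_le_sum hrem).trans ?_)
      rw [← sum_mul, ← sum_mul, htel, mul_comm V M]
    have h2 : |∑ i ∈ range N, g (a i) * (tailIntegral K (a i) - tailIntegral K (a (i + 1)))| ≤ C * V := by
      have h3 : tailIntegral K (-1) = 0 := h0
      rw [sum_mul_sub_succ (fun i => g (a i)) (fun i => tailIntegral K (a i)), ha0, haN, h3,
        tailIntegral_one, mul_zero, mul_zero, add_zero, sub_zero, ← htel, mul_comm C, sum_mul]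
      refine (abs_sum_le_sum_abs _ _).trans (sum_le_sum fun i hi => ?_)
      have hi' := mem_range.1 hi
      have h4 := hgv _ (hmem i hi'.le) _ (hmem _ hi') (hstep i)
      rw [abs_mul]
      exact mul_le_mul h4 (hC _ (hmem _ hi')) (abs_nonneg _) ((abs_nonneg _).trans h4)
    exact (abs_add_le _ _).trans (add_le_add h2 h1)
  have hlim : Filter.Tendsto (fun N : ℕ => C * V + M * V * (2 / (N : ℝ))) Filter.atTop
      (nhds (C * V + M * V * 0)) :=
    ((tendsto_const_div_atTop_nhds_zero_nat 2).const_mul _).const_add _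
  rw [mul_zero, add_zero] at hlim
  exact ge_of_tendsto hlim ((Filter.eventually_gt_atTop 0).mono main)

/-- The coefficients of the Fejér–Jackson kernel of degree `N - 1`. -/
noncomputable def jacksonCoeff (N k : ℕ) : ℝ := Real.sin ((k + 1) * (Real.pi / (N + 1)))

/-- The (unnormalized) Fejér–Jackson kernel, a nonnegative cosine polynomial of degree `N - 1`. -/
noncomputable def jacksonKernel (N : ℕ) (y : ℝ) : ℝ :=
  ∑ k ∈ range N, ∑ l ∈ range N,
    jacksonCoeff N k * jacksonCoeff N l * Real.cos ((((k : ℤ) - l : ℤ) : ℝ) * y)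

lemma jacksonKernel_nonneg (N : ℕ) (y : ℝ) : 0 ≤ jacksonKernel N y := by
  have h : jacksonKernel N y = (∑ k ∈ range N, jacksonCoeff N k * Real.cos (k * y)) ^ 2 +
      (∑ k ∈ range N, jacksonCoeff N k * Real.sin (k * y)) ^ 2 := by
    rw [sq, sq, sum_mul_sum, sum_mul_sum, ← sum_add_distrib]
    refine sum_congr rfl fun k _ => ?_
    rw [← sum_add_distrib]
    refine sum_congr rfl fun l _ => ?_
    push_cast
    rw [sub_mul, Real.cos_sub]
    ring
  rw [h]
  positivity

lemma continuous_jacksonKernel (N : ℕ) : Continuous (jacksonKernel N) := by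
  unfold jacksonKernel
  fun_prop

/-- The integral of the even `2π`-periodic function `h` over a period, folded to `[0, π]`
around the point `φ`. -/
noncomputable def foldIntegral (φ : ℝ) (h : ℝ → ℝ) : ℝ :=
  ∫ θ in (0 : ℝ)..Real.pi, (h (φ - θ) + h (φ + θ))

lemma foldIntegral_cos (φ : ℝ) (m : ℤ) :
    foldIntegral φ (fun y => Real.cos (m * y)) = if m = 0 then 2 * Real.pi else 0 := by
  have h : ∀ θ : ℝ, Real.cos (m * (φ - θ)) + Real.cos (m * (φ + θ)) =
      2 * Real.cos (m * φ) * Real.cos (m * θ) := fun θ => by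
    rw [mul_sub, mul_add, Real.cos_sub, Real.cos_add]; ring
  unfold foldIntegral
  simp_rw [h]
  rw [intervalIntegral.integral_const_mul]
  split_ifs with hm
  · simp [hm]
  · have hm' : (m : ℝ) ≠ 0 := by exact_mod_cast hm
    rw [intervalIntegral.integral_comp_mul_left (fun x => Real.cos x) hm', integral_cos,
      Real.sin_int_mul_pi]
    simp

lemma foldIntegral_add (φ : ℝ) {h k : ℝ → ℝ} (hh : Continuous h) (hk : Continuous k) :
    foldIntegral φ (fun y => h y + k y) = foldIntegral φ h + foldIntegral φ k := by
  unfold foldIntegral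
  rw [← intervalIntegral.integral_add (Continuous.intervalIntegrable (by fun_prop) _ _)
    (Continuous.intervalIntegrable (by fun_prop) _ _)]
  congr 1; ext θ; ring

lemma foldIntegral_const_mul (φ c : ℝ) (h : ℝ → ℝ) :
    foldIntegral φ (fun y => c * h y) = c * foldIntegral φ h := by
  unfold foldIntegral
  rw [← intervalIntegral.integral_const_mul]
  congr 1; ext θ; ring

lemma foldIntegral_sum (φ : ℝ) {ι : Type*} (s : Finset ι) {h : ι → ℝ → ℝ}
    (hh : ∀ i, Continuous (h i)) :
    foldIntegral φ (fun y => ∑ i ∈ s, h i y) = ∑ i ∈ s, foldIntegral φ (h i) := by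
  unfold foldIntegral
  rw [← intervalIntegral.integral_finsetSum
    (fun i _ => Continuous.intervalIntegrable (by have := hh i; fun_prop) _ _)]
  simp_rw [sum_add_distrib]

lemma foldIntegral_jacksonKernel (N : ℕ) (φ : ℝ) :
    foldIntegral φ (jacksonKernel N) = 2 * Real.pi * ∑ k ∈ range N, jacksonCoeff N k ^ 2 := by
  unfold jacksonKernel
  rw [foldIntegral_sum _ _ (fun k => by fun_prop), mul_sum]
  refine sum_congr rfl fun k hk => ?_
  rw [foldIntegral_sum _ _ (fun k => by fun_prop)]
  simp_rw [foldIntegral_const_mul, foldIntegral_cos]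
  rw [sum_eq_single k]
  · simp; ring
  · intro l _ hl
    rw [if_neg (by omega), mul_zero]
  · intro h; exact absurd hk h

lemma sum_jacksonCoeff_neighbours {N k : ℕ} (hk : k < N) :
    ∑ l ∈ range N, jacksonCoeff N l *
      ((if (k : ℤ) - l + 1 = 0 then 1 else 0) + (if (k : ℤ) - l - 1 = 0 then 1 else 0)) =
    2 * Real.cos (Real.pi / (N + 1)) * jacksonCoeff N k := by
  have hN : ((N : ℝ) + 1) ≠ 0 := by positivity
  have h1 : ∑ l ∈ range N, jacksonCoeff N l * (if (k : ℤ) - l + 1 = 0 then (1 : ℝ) else 0) =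
      Real.sin ((k + 2) * (Real.pi / (N + 1))) := by
    rcases Nat.lt_or_ge (k + 1) N with h | h
    · rw [sum_eq_single (k + 1)]
      · rw [if_pos (by push_cast; ring), jacksonCoeff]
        push_cast
        rw [mul_one]; congr 1; ring
      · intro l _ hl
        rw [if_neg (by omega), mul_zero]
      · intro hh; exact absurd (mem_range.2 h) hh
    · have hkN : (k : ℝ) + 2 = N + 1 := by
        have : k + 1 = N := by omega
        rw [← this]; push_cast; ring
      rw [hkN, mul_div_cancel₀ _ hN, Real.sin_pi]
      refine sum_eq_zero fun l hl => ?_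
      have := mem_range.1 hl
      rw [if_neg (by omega), mul_zero]
  have h2 : ∑ l ∈ range N, jacksonCoeff N l * (if (k : ℤ) - l - 1 = 0 then (1 : ℝ) else 0) =
      Real.sin (k * (Real.pi / (N + 1))) := by
    rcases k with _ | k
    · simp only [Nat.cast_zero, zero_mul, Real.sin_zero]
      refine sum_eq_zero fun l hl => ?_
      rw [if_neg (by omega), mul_zero]
    · rw [sum_eq_single k]
      · rw [if_pos (by push_cast; ring), jacksonCoeff]
        push_cast
        rw [mul_one]
      · intro l _ hl
        rw [if_neg (by omega), mul_zero]
      · intro hh; exact absurd (mem_range.2 (by omega)) hh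
  simp_rw [mul_add]
  rw [sum_add_distrib, h1, h2, jacksonCoeff]
  set α := Real.pi / ((N : ℝ) + 1)
  rw [show ((k : ℝ) + 2) * α = (k + 1) * α + α by ring,
    show (k : ℝ) * α = (k + 1) * α - α by ring, Real.sin_add, Real.sin_sub]
  ring

lemma foldIntegral_cos_mul_jacksonKernel (N : ℕ) (φ : ℝ) :
    foldIntegral φ (fun y => Real.cos y * jacksonKernel N y) =
      2 * Real.pi * Real.cos (Real.pi / (N + 1)) * ∑ k ∈ range N, jacksonCoeff N k ^ 2 := by
  have h : ∀ y, Real.cos y * jacksonKernel N y = ∑ k ∈ range N, ∑ l ∈ range N,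
      jacksonCoeff N k * jacksonCoeff N l / 2 * (Real.cos ((((k : ℤ) - l + 1 : ℤ) : ℝ) * y) +
        Real.cos ((((k : ℤ) - l - 1 : ℤ) : ℝ) * y)) := fun y => by
    unfold jacksonKernel
    rw [mul_sum]
    refine sum_congr rfl fun k _ => ?_
    rw [mul_sum]
    refine sum_congr rfl fun l _ => ?_
    push_cast
    rw [show ((k : ℝ) - l + 1) * y = (k - l) * y + y by ring,
      show ((k : ℝ) - l - 1) * y = (k - l) * y - y by ring, Real.cos_add, Real.cos_sub]
    ring
  simp_rw [h]
  rw [foldIntegral_sum _ _ (fun k => by fun_prop), mul_sum]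
  refine sum_congr rfl fun k hk => ?_
  rw [foldIntegral_sum _ _ (fun k => by fun_prop)]
  have := sum_jacksonCoeff_neighbours (mem_range.1 hk)
  rw [show 2 * Real.pi * Real.cos (Real.pi / (N + 1)) * jacksonCoeff N k ^ 2 =
    Real.pi * jacksonCoeff N k * (2 * Real.cos (Real.pi / (N + 1)) * jacksonCoeff N k) by ring,
    ← this, mul_sum]
  refine sum_congr rfl fun l _ => ?_
  rw [foldIntegral_const_mul, foldIntegral_add _ (by fun_prop) (by fun_prop),
    foldIntegral_cos, foldIntegral_cos]
  split_ifs <;> ring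

lemma two_mul_abs_sin_half_le {σ : ℝ} (hσ : 0 < σ) (y : ℝ) :
    2 * |Real.sin (y / 2)| ≤ (1 - Real.cos y) / (2 * σ) + σ := by
  have h : Real.cos y = 1 - 2 * Real.sin (y / 2) ^ 2 := by
    have h := Real.cos_two_mul (y / 2)
    rw [mul_div_cancel₀ y two_ne_zero] at h
    linarith [Real.sin_sq_add_cos_sq (y / 2)]
  rw [h, ← sq_abs (Real.sin (y / 2)), ← sub_nonneg,
    show (1 - (1 - 2 * |Real.sin (y / 2)| ^ 2)) / (2 * σ) + σ - 2 * |Real.sin (y / 2)| =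
      (|Real.sin (y / 2)| - σ) ^ 2 / σ by field_simp; ring]
  positivity

lemma abs_add_le_two_mul_abs_sin {M x y φ θ : ℝ} (hφ : φ ∈ Set.Icc 0 Real.pi)
    (hθ : θ ∈ Set.Icc 0 Real.pi) (hM : 0 ≤ M)
    (hx : |x| ≤ M * (1 - Real.cos φ)) (hx' : |x| ≤ M * (1 + Real.cos φ))
    (hy : |y| ≤ M * (1 - Real.cos θ)) (hy' : |y| ≤ M * (1 + Real.cos θ)) :
    |x + y| ≤ M * (2 * |Real.sin ((φ + θ) / 2)|) := by
  obtain ⟨hφ0, hφ1⟩ := hφ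
  obtain ⟨hθ0, hθ1⟩ := hθ
  have hsum := Real.cos_add_cos φ θ
  have hsin0 : 0 ≤ Real.sin ((φ + θ) / 2) :=
    Real.sin_nonneg_of_nonneg_of_le_pi (by linarith) (by linarith)
  have hsin1 := Real.sin_le_one ((φ + θ) / 2)
  have hsq := Real.sin_sq_add_cos_sq ((φ + θ) / 2)
  have hle1 : Real.cos ((φ + θ) / 2) ≤ Real.cos ((φ - θ) / 2) := by
    rw [← Real.cos_abs ((φ - θ) / 2)]
    apply Real.cos_le_cos_of_nonneg_of_le_pi (abs_nonneg _) (by linarith)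
    rw [abs_le]; constructor <;> linarith
  have hle2 : -Real.cos ((φ + θ) / 2) ≤ Real.cos ((φ - θ) / 2) := by
    rw [← Real.cos_abs ((φ - θ) / 2), ← Real.cos_pi_sub]
    apply Real.cos_le_cos_of_nonneg_of_le_pi (abs_nonneg _) (by linarith)
    rw [abs_le]; constructor <;> linarith
  rw [abs_of_nonneg hsin0]
  set p := Real.cos ((φ + θ) / 2)
  set q := Real.cos ((φ - θ) / 2)
  set s := Real.sin ((φ + θ) / 2)
  refine (abs_add_le _ _).trans ?_
  rcases le_total 0 p with hp | hp
  · have : |x| + |y| ≤ M * (2 - 2 * p * q) := by rw [← hsum]; linarith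
    exact this.trans (mul_le_mul_of_nonneg_left (by nlinarith) hM)
  · have : |x| + |y| ≤ M * (2 + 2 * p * q) := by rw [← hsum]; linarith
    exact this.trans (mul_le_mul_of_nonneg_left (by nlinarith) hM)

lemma abs_cos_sub_cos_le (φ θ : ℝ) :
    |Real.cos φ - Real.cos θ| ≤ 2 * |Real.sin ((φ - θ) / 2)| := by
  rw [Real.cos_sub_cos, abs_mul, abs_mul]
  have := Real.abs_sin_le_one ((φ + θ) / 2)
  have h2 := abs_nonneg (Real.sin ((φ - θ) / 2))
  rw [abs_neg, abs_two]
  nlinarith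

/-- A Jackson–Favard estimate: if the sine coefficients of order at most `d` of `ψ` vanish and the
value `x` is controlled by the modulus of continuity of the odd extension of `ψ` at `φ`, then `x` is
small. -/
lemma abs_le_of_sine_coeff_eq_zero {ψ : ℝ → ℝ} {x φ M : ℝ} {d : ℕ} (hM : 0 ≤ M)
    (hψ : Continuous ψ)
    (horth : ∀ m : ℤ, |m| ≤ d → ∫ θ in (0 : ℝ)..Real.pi, ψ θ * Real.sin (m * θ) = 0)
    (hsub : ∀ θ ∈ Set.Icc 0 Real.pi, |x - ψ θ| ≤ M * (2 * |Real.sin ((φ - θ) / 2)|))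
    (hadd : ∀ θ ∈ Set.Icc 0 Real.pi, |x + ψ θ| ≤ M * (2 * |Real.sin ((φ + θ) / 2)|)) :
    |x| ≤ Real.pi / (d + 1) * M := by
  set N := d + 1 with hN
  set α := Real.pi / ((N : ℝ) + 1) with hα
  set σ := Real.sin (α / 2) with hσ
  set S := ∑ k ∈ range N, jacksonCoeff N k ^ 2 with hS
  have hpi := Real.pi_pos
  have hN0 : (0 : ℝ) ≤ N := Nat.cast_nonneg N
  have hα0 : 0 < α := by positivity
  have hαpi : α < Real.pi := by
    rw [hα, div_lt_iff₀ (by positivity)]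
    have : (0 : ℝ) < N := by rw [hN]; positivity
    nlinarith
  have hσ0 : 0 < σ := Real.sin_pos_of_pos_of_lt_pi (by linarith) (by linarith)
  have hS0 : 0 < S := by
    refine lt_of_lt_of_le ?_ (single_le_sum (f := fun k => jacksonCoeff N k ^ 2)
      (fun k _ => sq_nonneg _) (mem_range.2 (Nat.succ_pos d)))
    have : 0 < jacksonCoeff N 0 := by
      unfold jacksonCoeff
      rw [Nat.cast_zero, zero_add, one_mul]
      exact Real.sin_pos_of_pos_of_lt_pi hα0 hαpi
    positivity
  have hJc := continuous_jacksonKernel N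
  have hodd : ∫ θ in (0 : ℝ)..Real.pi,
      ψ θ * (jacksonKernel N (φ - θ) - jacksonKernel N (φ + θ)) = 0 := by
    have h : ∀ θ, ψ θ * (jacksonKernel N (φ - θ) - jacksonKernel N (φ + θ)) =
        ∑ k ∈ range N, ∑ l ∈ range N, jacksonCoeff N k * jacksonCoeff N l * 2 *
          Real.sin ((((k : ℤ) - l : ℤ) : ℝ) * φ) *
            (ψ θ * Real.sin ((((k : ℤ) - l : ℤ) : ℝ) * θ)) := fun θ => by
      unfold jacksonKernel
      rw [← sum_sub_distrib, mul_sum]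
      refine sum_congr rfl fun k _ => ?_
      rw [← sum_sub_distrib, mul_sum]
      refine sum_congr rfl fun l _ => ?_
      rw [mul_sub _ φ, mul_add _ φ, Real.cos_sub, Real.cos_add]
      ring
    simp_rw [h]
    rw [intervalIntegral.integral_finsetSum
      fun k _ => Continuous.intervalIntegrable (by fun_prop) _ _]
    refine sum_eq_zero fun k hk => ?_
    rw [intervalIntegral.integral_finsetSum
      fun k _ => Continuous.intervalIntegrable (by fun_prop) _ _]
    refine sum_eq_zero fun l hl => ?_
    have hk' := mem_range.1 hk
    have hl' := mem_range.1 hl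
    rw [intervalIntegral.integral_const_mul, horth _ (by rw [abs_le]; constructor <;> omega),
      mul_zero]
  set A : ℝ → ℝ := fun y => ((1 - Real.cos y) / (2 * σ) + σ) * jacksonKernel N y with hA
  have hAint : foldIntegral φ A = 2 * Real.pi * S * (2 * σ) := by
    have : A = fun y => (1 / (2 * σ) + σ) * jacksonKernel N y +
        (-1 / (2 * σ)) * (Real.cos y * jacksonKernel N y) := by
      ext y; simp only [hA]; ring
    rw [this, foldIntegral_add _ (by fun_prop) (by fun_prop), foldIntegral_const_mul,
      foldIntegral_const_mul, foldIntegral_jacksonKernel, foldIntegral_cos_mul_jacksonKernel]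
    have hc : Real.cos α = 1 - 2 * σ ^ 2 := by
      have h := Real.cos_two_mul (α / 2)
      rw [mul_div_cancel₀ α two_ne_zero] at h
      linarith [Real.sin_sq_add_cos_sq (α / 2)]
    rw [← hα, hc]
    field_simp
    ring
  have hmain : 2 * Real.pi * S * x = ∫ θ in (0 : ℝ)..Real.pi,
      ((x - ψ θ) * jacksonKernel N (φ - θ) +
        (x + ψ θ) * jacksonKernel N (φ + θ)) := by
    have e : ∀ θ, (x - ψ θ) * jacksonKernel N (φ - θ) +
        (x + ψ θ) * jacksonKernel N (φ + θ) =
        x * (jacksonKernel N (φ - θ) + jacksonKernel N (φ + θ)) -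
        ψ θ * (jacksonKernel N (φ - θ) - jacksonKernel N (φ + θ)) := fun θ => by ring
    simp_rw [e]
    rw [intervalIntegral.integral_sub (Continuous.intervalIntegrable (by fun_prop) _ _)
      (Continuous.intervalIntegrable (by fun_prop) _ _), hodd, sub_zero,
      intervalIntegral.integral_const_mul]
    have := foldIntegral_jacksonKernel N φ
    unfold foldIntegral at this
    rw [this]; ring
  have hpt : ∀ θ ∈ Set.Icc 0 Real.pi, |(x - ψ θ) * jacksonKernel N (φ - θ) +
        (x + ψ θ) * jacksonKernel N (φ + θ)| ≤ M * (A (φ - θ) + A (φ + θ)) := by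
    intro θ hθ
    have g1 := (hsub θ hθ).trans
      (mul_le_mul_of_nonneg_left (two_mul_abs_sin_half_le hσ0 (φ - θ)) hM)
    have g2 := (hadd θ hθ).trans
      (mul_le_mul_of_nonneg_left (two_mul_abs_sin_half_le hσ0 (φ + θ)) hM)
    refine (abs_add_le _ _).trans ?_
    rw [abs_mul, abs_mul, abs_of_nonneg (jacksonKernel_nonneg N _),
      abs_of_nonneg (jacksonKernel_nonneg N _), mul_add]
    simp only [hA, ← mul_assoc]
    exact add_le_add (mul_le_mul_of_nonneg_right g1 (jacksonKernel_nonneg N _))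
      (mul_le_mul_of_nonneg_right g2 (jacksonKernel_nonneg N _))
  have hAc : Continuous A := by simp only [hA]; fun_prop
  clear_value A S σ α N
  have hfin : |2 * Real.pi * S * x| ≤ M * (2 * Real.pi * S * (2 * σ)) := by
    rw [← hAint, hmain]
    unfold foldIntegral
    rw [← intervalIntegral.integral_const_mul]
    refine (intervalIntegral.abs_integral_le_integral_abs hpi.le).trans ?_
    exact intervalIntegral.integral_mono_on hpi.le
      (Continuous.intervalIntegrable (by fun_prop) _ _)
      (Continuous.intervalIntegrable (by fun_prop) _ _) hpt
  have hSp : 0 < 2 * Real.pi * S := by positivity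
  rw [abs_mul, abs_of_pos hSp, show M * (2 * Real.pi * S * (2 * σ)) =
    2 * Real.pi * S * (M * (2 * σ)) by ring] at hfin
  have h2 := le_of_mul_le_mul_left hfin hSp
  have h3 : 2 * σ ≤ Real.pi / (d + 1) := by
    have : σ ≤ α / 2 := by rw [hσ]; exact Real.sin_le (by linarith)
    have h4 : α ≤ Real.pi / (d + 1) := by
      rw [hα, hN]
      push_cast
      gcongr
      linarith
    linarith
  rw [mul_comm]
  exact h2.trans (mul_le_mul_of_nonneg_left h3 hM)

/-- A Lipschitz function on `[-1, 1]`, vanishing at the endpoints, whose low-order sine coefficients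
in the variable `arccos` vanish, is small. -/
lemma abs_le_of_sine_coeff_comp_cos_eq_zero {κ : ℝ → ℝ} {M : ℝ} {d : ℕ} (hM : 0 ≤ M)
    (hlip : ∀ a ∈ Set.Icc (-1 : ℝ) 1, ∀ b ∈ Set.Icc (-1 : ℝ) 1, |κ a - κ b| ≤ M * |a - b|)
    (hcont : ContinuousOn κ (Set.Icc (-1 : ℝ) 1))
    (h1 : κ 1 = 0) (hm1 : κ (-1) = 0)
    (horth : ∀ m : ℤ, |m| ≤ d → ∫ θ in (0 : ℝ)..Real.pi, κ (Real.cos θ) * Real.sin (m * θ) = 0)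
    {u : ℝ} (hu : u ∈ Set.Icc (-1 : ℝ) 1) :
    |κ u| ≤ Real.pi / (d + 1) * M := by
  have hcosmem : ∀ θ, Real.cos θ ∈ Set.Icc (-1 : ℝ) 1 := fun θ =>
    ⟨Real.neg_one_le_cos θ, Real.cos_le_one θ⟩
  have hcosφ : Real.cos (Real.arccos u) = u := Real.cos_arccos hu.1 hu.2
  have hφm : Real.arccos u ∈ Set.Icc 0 Real.pi := ⟨Real.arccos_nonneg u, Real.arccos_le_pi u⟩
  have hb1 : ∀ a ∈ Set.Icc (-1 : ℝ) 1, |κ a| ≤ M * (1 - a) := fun a ha => by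
    have := hlip a ha 1 (by norm_num)
    rwa [h1, sub_zero, abs_sub_comm, abs_of_nonneg (by linarith [ha.2] : 0 ≤ 1 - a)] at this
  have hb2 : ∀ a ∈ Set.Icc (-1 : ℝ) 1, |κ a| ≤ M * (1 + a) := fun a ha => by
    have := hlip a ha (-1) (by norm_num)
    rwa [hm1, sub_zero, abs_of_nonneg (by linarith [ha.1] : 0 ≤ a - -1), sub_neg_eq_add,
      add_comm a] at this
  refine abs_le_of_sine_coeff_eq_zero (φ := Real.arccos u) hM
    (hcont.comp_continuous Real.continuous_cos hcosmem) horth (fun θ _ => ?_) (fun θ hθ => ?_)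
  · refine (hlip _ hu _ (hcosmem θ)).trans (mul_le_mul_of_nonneg_left ?_ hM)
    nth_rw 1 [← hcosφ]
    exact abs_cos_sub_cos_le _ _
  · exact abs_add_le_two_mul_abs_sin hφm hθ hM (by rw [hcosφ]; exact hb1 u hu)
      (by rw [hcosφ]; exact hb2 u hu) (hb1 _ (hcosmem θ)) (hb2 _ (hcosmem θ))

/-- The barycentric weight of `y` with respect to the finite set of nodes `S`. -/
noncomputable def baryWeight (S : Finset ℝ) (y : ℝ) : ℝ := ∏ z ∈ S.erase y, (y - z)⁻¹

/-- The divided difference on the nodes `S` of the indicator function of `T ⊆ S`. -/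
noncomputable def indicatorDividedDiff (T S : Finset ℝ) : ℝ := ∑ y ∈ T, baryWeight S y

lemma baryWeight_erase {S : Finset ℝ} {a y : ℝ} (ha : a ∈ S) (hay : y ≠ a) :
    baryWeight (S.erase a) y = baryWeight S y * (y - a) := by
  unfold baryWeight
  rw [erase_right_comm, ← mul_prod_erase (S.erase y) _ (mem_erase.2 ⟨hay.symm, ha⟩)]
  have : y - a ≠ 0 := sub_ne_zero.2 hay
  field_simp

lemma sub_mul_indicatorDividedDiff {T S : Finset ℝ} {a b : ℝ} (ha : a ∈ S) (hb : b ∈ S) :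
    (b - a) * indicatorDividedDiff T S =
      indicatorDividedDiff (T.erase a) (S.erase a) - indicatorDividedDiff (T.erase b) (S.erase b) := by
  have h : ∀ {c}, c ∈ S → indicatorDividedDiff (T.erase c) (S.erase c) =
      ∑ y ∈ T, baryWeight S y * (y - c) := by
    intro c hc
    unfold indicatorDividedDiff
    rw [← sum_erase T (a := c) (f := fun y => baryWeight S y * (y - c)) (by simp)]
    exact sum_congr rfl fun y hy => baryWeight_erase hc (mem_erase.1 hy).1
  rw [h ha, h hb, ← sum_sub_distrib, indicatorDividedDiff, mul_sum]
  exact sum_congr rfl fun y _ => by ring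

lemma indicatorDividedDiff_singleton (y : ℝ) : indicatorDividedDiff {y} {y} = 1 := by
  simp [indicatorDividedDiff, baryWeight]

lemma indicatorDividedDiff_self {S : Finset ℝ} (hS : 2 ≤ #S) : indicatorDividedDiff S S = 0 := by
  induction S using Finset.strongInduction with
  | H S ih =>
    obtain ⟨a, ha, b, hb, hab⟩ := one_lt_card.1 hS
    have key := sub_mul_indicatorDividedDiff (T := S) ha hb
    have heq : indicatorDividedDiff (S.erase a) (S.erase a) =
        indicatorDividedDiff (S.erase b) (S.erase b) := by
      rcases hS.lt_or_eq with h | h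
      · rw [ih _ (erase_ssubset ha) (by rw [card_erase_of_mem ha]; omega),
          ih _ (erase_ssubset hb) (by rw [card_erase_of_mem hb]; omega)]
      · obtain ⟨y, hy⟩ := card_eq_one.1 (show #(S.erase a) = 1 by rw [card_erase_of_mem ha]; omega)
        obtain ⟨z, hz⟩ := card_eq_one.1 (show #(S.erase b) = 1 by rw [card_erase_of_mem hb]; omega)
        rw [hy, hz, indicatorDividedDiff_singleton, indicatorDividedDiff_singleton]
    rw [heq, sub_self] at key
    exact (mul_eq_zero.1 key).resolve_left (sub_ne_zero.2 hab.symm)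

/-- Divided differences of a step function have a sign determined by the number of nodes to the
right of the jump. -/
lemma indicatorDividedDiff_sign {T S : Finset ℝ} (hTS : T ⊆ S)
    (hsep : ∀ y ∈ T, ∀ z ∈ S \ T, z < y) (hT : T.Nonempty) (hST : (S \ T).Nonempty) :
    0 ≤ (-1) ^ (#T + 1) * indicatorDividedDiff T S := by
  induction S using Finset.strongInduction generalizing T with
  | H S ih =>
    obtain ⟨a, ha⟩ := hST
    obtain ⟨b, hb⟩ := hT
    have hba : 0 < b - a := sub_pos.2 (hsep b hb a ha)
    obtain ⟨haS, haT⟩ := mem_sdiff.1 ha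
    have hbS := hTS hb
    have key := sub_mul_indicatorDividedDiff (T := T) haS hbS
    rw [erase_eq_of_notMem haT] at key
    have hTa : T ⊆ S.erase a := fun y hy => mem_erase.2 ⟨by rintro rfl; exact haT hy, hTS hy⟩
    have h1 : 0 ≤ (-1) ^ (#T + 1) * indicatorDividedDiff T (S.erase a) := by
      rcases (S.erase a \ T).eq_empty_or_nonempty with he | hne
      · have hE : S.erase a = T := subset_antisymm (sdiff_eq_empty_iff_subset.1 he) hTa
        rw [hE]
        rcases Nat.lt_or_ge #T 2 with h | h
        · have hc : #T = 1 := by have := card_pos.2 ⟨b, hb⟩; omega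
          obtain ⟨y, hy⟩ := card_eq_one.1 hc
          rw [hy, indicatorDividedDiff_singleton, card_singleton]
          norm_num
        · rw [indicatorDividedDiff_self h, mul_zero]
      · exact ih _ (erase_ssubset haS) hTa
          (fun y hy z hz => hsep y hy z (sdiff_subset_sdiff (erase_subset _ _) subset_rfl hz))
          ⟨b, hb⟩ hne
    have h2 : 0 ≤ (-1) ^ #T * indicatorDividedDiff (T.erase b) (S.erase b) := by
      rcases (T.erase b).eq_empty_or_nonempty with he | hne
      · simp [he, indicatorDividedDiff]
      · have hsd : S.erase b \ T.erase b = S \ T := by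
          ext z; simp only [mem_sdiff, mem_erase]
          constructor
          · rintro ⟨⟨h, h'⟩, h''⟩; exact ⟨h', fun h3 => h'' ⟨h, h3⟩⟩
          · rintro ⟨h, h'⟩; exact ⟨⟨by rintro rfl; exact h' hb, h⟩, fun h3 => h' h3.2⟩
        have := ih (S.erase b) (erase_ssubset hbS) (T := T.erase b) (erase_subset_erase _ hTS)
          (fun y hy z hz => hsep y (mem_of_mem_erase hy) z (hsd ▸ hz)) hne (hsd ▸ ⟨a, ha⟩)
        rwa [card_erase_add_one hb] at this
    have h3 : (b - a) * ((-1) ^ (#T + 1) * indicatorDividedDiff T S) =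
        (-1) ^ (#T + 1) * indicatorDividedDiff T (S.erase a) +
          (-1) ^ #T * indicatorDividedDiff (T.erase b) (S.erase b) := by
      rw [mul_left_comm, key, pow_succ]; ring
    exact nonneg_of_mul_nonneg_right (h3 ▸ add_nonneg h1 h2) hba

/-- **Wainerman's lemma**, in terms of divided differences: the divided difference of a step
function is dominated by a single barycentric weight, and one may avoid a given node. -/
lemma exists_abs_indicatorDividedDiff_le {T S : Finset ℝ} (hTS : T ⊆ S)
    (hsep : ∀ y ∈ T, ∀ z ∈ S \ T, z < y) (hT : T.Nonempty) (hST : (S \ T).Nonempty) (x : ℝ) :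
    ∃ y ∈ S, y ≠ x ∧ |indicatorDividedDiff T S| ≤ |baryWeight S y| := by
  have hsign := indicatorDividedDiff_sign hTS hsep hT hST
  have habs : |indicatorDividedDiff T S| = (-1) ^ (#T + 1) * indicatorDividedDiff T S := by
    rw [← abs_of_nonneg hsign, abs_mul, abs_pow, abs_neg, abs_one, one_pow, one_mul]
  have hwabs : ∀ y, (-1) ^ (#T + 1) * baryWeight S y ≤ |baryWeight S y| ∧
      -((-1) ^ (#T + 1) * baryWeight S y) ≤ |baryWeight S y| := by
    intro y
    have : |(-1) ^ (#T + 1) * baryWeight S y| = |baryWeight S y| := by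
      rw [abs_mul, abs_pow, abs_neg, abs_one, one_pow, one_mul]
    rw [← this]
    exact ⟨le_abs_self _, neg_le_abs _⟩
  set p := T.min' hT with hp
  set q := (S \ T).max' hST with hq
  have hpT : p ∈ T := min'_mem _ _
  have hqm : q ∈ S \ T := max'_mem _ _
  obtain ⟨hqS, hqT⟩ := mem_sdiff.1 hqm
  by_cases hpx : p = x
  · refine ⟨q, hqS, fun h => (hsep p hpT q hqm).ne (h.trans hpx.symm), ?_⟩
    have hsum : indicatorDividedDiff (insert q T) S = baryWeight S q + indicatorDividedDiff T S :=
      sum_insert hqT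
    have hsub : insert q T ⊆ S := insert_subset hqS hTS
    have h0 : (-1) ^ (#T + 1) * indicatorDividedDiff (insert q T) S ≤ 0 := by
      rcases (S \ insert q T).eq_empty_or_nonempty with he | hne
      · have hE : S = insert q T := subset_antisymm (sdiff_eq_empty_iff_subset.1 he) hsub
        rw [hE, indicatorDividedDiff_self, mul_zero]
        rw [card_insert_of_notMem hqT]
        have := card_pos.2 hT
        omega
      · have := indicatorDividedDiff_sign hsub ?_ (insert_nonempty _ _) hne
        · rw [card_insert_of_notMem hqT, pow_succ] at this
          linarith
        intro y hy z hz
        simp only [mem_sdiff, mem_insert, not_or] at hz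
        have hz' : z ∈ S \ T := mem_sdiff.2 ⟨hz.1, hz.2.2⟩
        rcases mem_insert.1 hy with rfl | hy
        · exact lt_of_le_of_ne (le_max' _ _ hz') hz.2.1
        · exact hsep y hy z hz'
    rw [hsum, mul_add] at h0
    linarith [(hwabs q).2]
  · refine ⟨p, hTS hpT, hpx, ?_⟩
    have hsum : baryWeight S p + indicatorDividedDiff (T.erase p) S = indicatorDividedDiff T S :=
      add_sum_erase T _ hpT
    have h0 : (-1) ^ (#T + 1) * indicatorDividedDiff (T.erase p) S ≤ 0 := by
      rcases (T.erase p).eq_empty_or_nonempty with he | hne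
      · simp [he, indicatorDividedDiff]
      · have := indicatorDividedDiff_sign ((erase_subset p T).trans hTS) ?_ hne
          (hST.mono (sdiff_subset_sdiff subset_rfl (erase_subset _ _)))
        · rw [card_erase_add_one hpT] at this
          rw [pow_succ]
          linarith
        intro y hy z hz
        obtain ⟨hyp, hyT⟩ := mem_erase.1 hy
        simp only [mem_sdiff, mem_erase, not_and] at hz
        by_cases hzp : z = p
        · rw [hzp]; exact lt_of_le_of_ne (min'_le _ _ hyT) hyp.symm
        · exact hsep y hyT z (mem_sdiff.2 ⟨hz.1, hz.2 hzp⟩)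
    rw [habs, ← hsum, mul_add]
    linarith [(hwabs p).1]

/-- The lower-order moments of `tailIntegral K` vanish when those of `K` do. -/
lemma integral_pow_mul_tailIntegral_eq_zero {K : ℝ → ℝ} {d : ℕ}
    (hK : IntervalIntegrable K volume (-1) 1)
    (horth : ∀ k ≤ d, ∫ t in (-1 : ℝ)..1, t ^ k * K t = 0) {k : ℕ} (hk : k < d) :
    ∫ t in (-1 : ℝ)..1, t ^ k * tailIntegral K t = 0 := by
  have h0 : ∫ t in (-1 : ℝ)..1, K t = 0 := by simpa using horth 0 (Nat.zero_le d)
  have := integral_mul_eq_integral_mul_tailIntegral (h := fun t => t ^ (k + 1) / (k + 1))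
    (g := fun t => t ^ k) (Continuous.intervalIntegrable (by fun_prop) _ _) hK ?_ h0
  · rw [← this]
    have h := horth (k + 1) hk
    simp_rw [div_mul_eq_mul_div, intervalIntegral.integral_div, h, zero_div]
  · intro t _
    rw [integral_pow]
    ring

lemma integral_eval_mul_eq_zero {K : ℝ → ℝ} {d : ℕ}
    (hK : IntervalIntegrable K volume (-1) 1)
    (horth : ∀ k ≤ d, ∫ t in (-1 : ℝ)..1, t ^ k * K t = 0) {p : Polynomial ℝ}
    (hp : p.natDegree ≤ d) :
    ∫ t in (-1 : ℝ)..1, p.eval t * K t = 0 := by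
  simp_rw [Polynomial.eval_eq_sum_range, sum_mul, mul_assoc]
  rw [intervalIntegral.integral_finsetSum]
  · refine sum_eq_zero fun k hk => ?_
    rw [intervalIntegral.integral_const_mul, horth k (by have := mem_range.1 hk; omega), mul_zero]
  · intro k _
    exact (hK.continuousOn_mul (by fun_prop)).const_mul _

lemma integral_tailIntegral_cos_mul_sin_eq_zero {K : ℝ → ℝ} {d : ℕ}
    (hK : IntervalIntegrable K volume (-1) 1)
    (horth : ∀ k ≤ d, ∫ t in (-1 : ℝ)..1, t ^ k * K t = 0) {m : ℤ} (hm : |m| ≤ d) :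
    ∫ θ in (0 : ℝ)..Real.pi, tailIntegral K (Real.cos θ) * Real.sin (m * θ) = 0 := by
  rcases eq_or_ne m 0 with rfl | hm0
  · simp
  have hm0' : (m : ℝ) ≠ 0 := by exact_mod_cast hm0
  set T := Polynomial.Chebyshev.T ℝ m
  set U := Polynomial.Chebyshev.U ℝ (m - 1)
  have h0 : ∫ t in (-1 : ℝ)..1, K t = 0 := by simpa using horth 0 (Nat.zero_le d)
  have hT : ∫ t in (-1 : ℝ)..1, T.eval t * K t = 0 := by
    apply integral_eval_mul_eq_zero hK horth
    rw [Polynomial.Chebyshev.natDegree_T]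
    rw [Int.abs_eq_natAbs] at hm
    exact_mod_cast hm
  have hder : Polynomial.derivative T = m * U := Polynomial.Chebyshev.T_derivative_eq_U m
  have hderiv : ∀ t : ℝ, HasDerivAt (fun t => T.eval t) (m * U.eval t) t := by
    intro t
    have := T.hasDerivAt t
    rw [hder] at this
    simpa using this
  have hUc : Continuous fun t : ℝ => (m : ℝ) * U.eval t := by fun_prop
  rw [integral_mul_eq_integral_mul_tailIntegral (g := fun t => (m : ℝ) * U.eval t)
    (hUc.intervalIntegrable _ _) hK ?_ h0] at hT
  · have hsub := intervalIntegral.integral_comp_mul_deriv' (a := 0) (b := Real.pi)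
      (f := Real.cos) (f' := fun θ => -Real.sin θ)
      (g := fun t => (m : ℝ) * U.eval t * tailIntegral K t)
      (fun θ _ => Real.hasDerivAt_cos θ) (by fun_prop) ?_
    · rw [Real.cos_zero, Real.cos_pi, intervalIntegral.integral_symm (-1) 1, hT, neg_zero] at hsub
      have e : ∀ θ : ℝ, ((fun t => (m : ℝ) * U.eval t * tailIntegral K t) ∘ Real.cos) θ *
          -Real.sin θ = -m * (tailIntegral K (Real.cos θ) * Real.sin (m * θ)) := by
        intro θ
        have := Polynomial.Chebyshev.U_real_cos θ (m - 1)
        push_cast at this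
        rw [sub_add_cancel] at this
        rw [← this]
        simp only [Function.comp_apply]
        ring
      simp_rw [e] at hsub
      rw [intervalIntegral.integral_const_mul] at hsub
      exact (mul_eq_zero.1 hsub).resolve_left (neg_ne_zero.2 hm0')
    · refine ContinuousOn.mul hUc.continuousOn ((continuousOn_tailIntegral hK).mono ?_)
      rintro _ ⟨θ, _, rfl⟩
      exact ⟨Real.neg_one_le_cos θ, Real.cos_le_one θ⟩
  · intro t _
    rw [intervalIntegral.integral_eq_sub_of_hasDerivAt (fun s _ => hderiv s)
      (hUc.intervalIntegrable _ _)]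
    ring

/-- The recursion bound: the tail integral of a bounded kernel orthogonal to the polynomials of
degree at most `d` is smaller by a factor `π / (d + 1)`. -/
lemma abs_tailIntegral_le {K : ℝ → ℝ} {M : ℝ} {d : ℕ}
    (hK : IntervalIntegrable K volume (-1) 1)
    (hM : ∀ t ∈ Set.Icc (-1 : ℝ) 1, |K t| ≤ M)
    (horth : ∀ k ≤ d, ∫ t in (-1 : ℝ)..1, t ^ k * K t = 0)
    {u : ℝ} (hu : u ∈ Set.Icc (-1 : ℝ) 1) :
    |tailIntegral K u| ≤ Real.pi / (d + 1) * M :=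
  abs_le_of_sine_coeff_comp_cos_eq_zero ((abs_nonneg _).trans (hM u hu))
    (fun _ ha _ hb => abs_tailIntegral_sub_le hK hM ha hb) (continuousOn_tailIntegral hK)
    (tailIntegral_one K) (by simpa [tailIntegral] using horth 0 (Nat.zero_le d))
    (fun _ hm => integral_tailIntegral_cos_mul_sin_eq_zero hK horth hm) hu

lemma intervalIntegrable_iterate_tailIntegral {K : ℝ → ℝ}
    (hK : IntervalIntegrable K volume (-1) 1) (s : ℕ) :
    IntervalIntegrable (tailIntegral^[s] K) volume (-1) 1 := by
  induction s with
  | zero => exact hK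
  | succ s ih =>
    rw [Function.iterate_succ_apply']
    exact intervalIntegrable_tailIntegral ih

lemma integral_pow_mul_iterate_tailIntegral_eq_zero {K : ℝ → ℝ} {d : ℕ}
    (hK : IntervalIntegrable K volume (-1) 1)
    (horth : ∀ k ≤ d, ∫ t in (-1 : ℝ)..1, t ^ k * K t = 0) (s : ℕ) :
    ∀ k, k + s ≤ d → ∫ t in (-1 : ℝ)..1, t ^ k * tailIntegral^[s] K t = 0 := by
  induction s with
  | zero => exact horth
  | succ s ih =>
    intro k hk
    rw [Function.iterate_succ_apply']
    exact integral_pow_mul_tailIntegral_eq_zero (d := d - s)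
      (intervalIntegrable_iterate_tailIntegral hK s) (fun k hk => ih k (by omega)) (by omega)

lemma abs_iterate_tailIntegral_le {K : ℝ → ℝ} {M : ℝ} {d : ℕ}
    (hK : IntervalIntegrable K volume (-1) 1)
    (hM : ∀ t ∈ Set.Icc (-1 : ℝ) 1, |K t| ≤ M)
    (horth : ∀ k ≤ d, ∫ t in (-1 : ℝ)..1, t ^ k * K t = 0) {s : ℕ} (hs : s ≤ d + 1) :
    ∀ u ∈ Set.Icc (-1 : ℝ) 1,
      |tailIntegral^[s] K u| ≤ (∏ i ∈ range s, Real.pi / ((d : ℝ) + 1 - i)) * M := by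
  induction s with
  | zero => simpa using hM
  | succ s ih =>
    intro u hu
    rw [Function.iterate_succ_apply', prod_range_succ, mul_comm (∏ i ∈ range s, _), mul_assoc]
    have := abs_tailIntegral_le (d := d - s) (intervalIntegrable_iterate_tailIntegral hK s)
      (ih (by omega)) (fun k hk => integral_pow_mul_iterate_tailIntegral_eq_zero hK horth s k
        (by omega)) hu
    rwa [Nat.cast_sub (by omega), show (d : ℝ) - s + 1 = d + 1 - s by ring] at this

/-- The iterated Peano kernel bound: a functional `∫ G₁ K` applied to the first of a chain of
successive antiderivatives, the last of which has bounded variation. -/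
lemma abs_integral_mul_le_of_chain {G : ℕ → ℝ → ℝ} {K : ℝ → ℝ} {M : ℝ} {d r : ℕ}
    (hr : r ≤ d)
    (hK : IntervalIntegrable K volume (-1) 1)
    (hM : ∀ t ∈ Set.Icc (-1 : ℝ) 1, |K t| ≤ M)
    (horth : ∀ k ≤ d, ∫ t in (-1 : ℝ)..1, t ^ k * K t = 0)
    (hG : ∀ s ≤ r, IntervalIntegrable (G s) volume (-1) 1)
    (hrep : ∀ s < r, ∀ t ∈ Set.Icc (-1 : ℝ) 1,
      G s t = G s (-1) + ∫ y in (-1 : ℝ)..t, G (s + 1) y)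
    (hBV : BoundedVariationOn (G r) (Set.Icc (-1 : ℝ) 1)) :
    |∫ t in (-1 : ℝ)..1, G 0 t * K t| ≤
      (∏ i ∈ range (r + 1), Real.pi / ((d : ℝ) + 1 - i)) * M *
        (eVariationOn (G r) (Set.Icc (-1 : ℝ) 1)).toReal := by
  have hmean : ∀ s ≤ r, ∫ t in (-1 : ℝ)..1, tailIntegral^[s] K t = 0 := fun s hs => by
    simpa using integral_pow_mul_iterate_tailIntegral_eq_zero hK horth s 0 (by omega)
  have hchain : ∀ s ≤ r, ∫ t in (-1 : ℝ)..1, G 0 t * K t =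
      ∫ t in (-1 : ℝ)..1, G s t * tailIntegral^[s] K t := by
    intro s
    induction s with
    | zero => intro _; rfl
    | succ s ih =>
      intro hs
      rw [ih (by omega), Function.iterate_succ_apply']
      exact integral_mul_eq_integral_mul_tailIntegral (hG (s + 1) hs)
        (intervalIntegrable_iterate_tailIntegral hK s) (hrep s hs) (hmean s (by omega))
  rw [hchain r le_rfl]
  refine abs_integral_mul_le_of_boundedVariationOn (hG r le_rfl) hBV
    (intervalIntegrable_iterate_tailIntegral hK r)
    (abs_iterate_tailIntegral_le hK hM horth (by omega)) (fun u hu => ?_) (hmean r le_rfl)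
  have := abs_iterate_tailIntegral_le hK hM horth (s := r + 1) (by omega) u hu
  rwa [Function.iterate_succ_apply'] at this

/-- The Peano kernel at `τ` of the interpolation error for functions with integrable derivative. -/
noncomputable def errorKernel {n : ℕ} (x : Fin n → ℝ) (τ u : ℝ) : ℝ :=
  (if u ≤ τ then 1 else 0) - ∑ j, (if u ≤ x j then 1 else 0) * lagBasis x j τ

lemma lagBasis_eq_eval {n : ℕ} (x : Fin n → ℝ) (k : Fin n) (t : ℝ) :
    lagBasis x k t = (Lagrange.basis univ x k).eval t := by
  unfold lagBasis Lagrange.basis Lagrange.basisDivisor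
  rw [Polynomial.eval_prod]
  refine prod_congr rfl fun j _ => ?_
  simp [div_eq_inv_mul]

lemma sum_pow_mul_lagBasis {n : ℕ} {x : Fin n → ℝ} (hx : Function.Injective x) {k : ℕ}
    (hk : k < n) (t : ℝ) : ∑ j, x j ^ k * lagBasis x j t = t ^ k := by
  have h := Lagrange.eq_interpolate (s := univ) (v := x) (f := (Polynomial.X : Polynomial ℝ) ^ k)
    hx.injOn (by rw [Polynomial.degree_X_pow, card_univ, Fintype.card_fin]; exact_mod_cast hk)
  have h2 := congrArg (Polynomial.eval t) h
  rw [Lagrange.interpolate_apply, Polynomial.eval_finsetSum] at h2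
  simpa [lagBasis_eq_eval] using h2.symm

lemma sum_lagBasis {n : ℕ} {x : Fin n → ℝ} (hx : Function.Injective x) (hn : 0 < n) (t : ℝ) :
    ∑ j, lagBasis x j t = 1 := by
  simpa using sum_pow_mul_lagBasis hx hn t

lemma lagInterp_node {n : ℕ} {x : Fin n → ℝ} (hx : Function.Injective x) (f : ℝ → ℝ)
    (i : Fin n) : lagInterp x f (x i) = f (x i) := by
  unfold lagInterp
  rw [sum_eq_single i]
  · rw [lagBasis_eq_eval, Lagrange.eval_basis_self hx.injOn (mem_univ i), mul_one]
  · intro j _ hj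
    rw [lagBasis_eq_eval, Lagrange.eval_basis_of_ne hj (mem_univ i), mul_zero]
  · simp

lemma mul_ite_eq_indicator (g : ℝ → ℝ) (a : ℝ) :
    (fun u => g u * (if u ≤ a then 1 else 0)) = {u | u ≤ a}.indicator g := by
  ext u
  by_cases h : u ≤ a <;> simp [Set.indicator, h]

lemma intervalIntegrable_mul_ite {g : ℝ → ℝ} (hg : IntervalIntegrable g volume (-1) 1) (a : ℝ) :
    IntervalIntegrable (fun u => g u * (if u ≤ a then 1 else 0)) volume (-1) 1 := by
  rw [mul_ite_eq_indicator]
  exact ⟨hg.1.indicator measurableSet_Iic, hg.2.indicator measurableSet_Iic⟩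

lemma integral_mul_ite (g : ℝ → ℝ) {a : ℝ} (ha : a ∈ Set.Icc (-1 : ℝ) 1) :
    ∫ u in (-1 : ℝ)..1, g u * (if u ≤ a then 1 else 0) = ∫ u in (-1 : ℝ)..a, g u := by
  rw [mul_ite_eq_indicator, intervalIntegral.integral_indicator ha]

lemma intervalIntegrable_errorKernel {n : ℕ} (x : Fin n → ℝ) (τ : ℝ) :
    IntervalIntegrable (errorKernel x τ) volume (-1) 1 := by
  have h : ∀ a : ℝ, IntervalIntegrable (fun u => if u ≤ a then (1 : ℝ) else 0) volume (-1) 1 :=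
    fun a => by
      simpa using intervalIntegrable_mul_ite (g := fun _ => 1) intervalIntegrable_const a
  have := IntervalIntegrable.sum univ (fun j (_ : j ∈ univ) => (h (x j)).mul_const (lagBasis x j τ))
  have h2 := (h τ).sub this
  refine h2.congr ?_
  intro u _
  simp [errorKernel]

/-- The Peano representation of the interpolation error. -/
lemma sub_lagInterp_eq_integral {n : ℕ} {x : Fin n → ℝ} (hx : Function.Injective x) (hn : 0 < n)
    (hmem : ∀ i, x i ∈ Set.Icc (-1 : ℝ) 1) {h g : ℝ → ℝ}
    (hg : IntervalIntegrable g volume (-1) 1)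
    (hh : ∀ t ∈ Set.Icc (-1 : ℝ) 1, h t = h (-1) + ∫ y in (-1 : ℝ)..t, g y)
    {τ : ℝ} (hτ : τ ∈ Set.Icc (-1 : ℝ) 1) :
    h τ - lagInterp x h τ = ∫ u in (-1 : ℝ)..1, g u * errorKernel x τ u := by
  have e : ∀ u, g u * errorKernel x τ u = g u * (if u ≤ τ then 1 else 0) -
      ∑ j, lagBasis x j τ * (g u * (if u ≤ x j then 1 else 0)) := fun u => by
    rw [errorKernel, mul_sub, mul_sum]
    congr 1
    exact sum_congr rfl fun j _ => by ring
  have hs : ∀ j ∈ univ, IntervalIntegrable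
      (fun u => lagBasis x j τ * (g u * (if u ≤ x j then 1 else 0))) volume (-1) 1 := fun j _ =>
    (intervalIntegrable_mul_ite hg (x j)).const_mul _
  have hs' : IntervalIntegrable
      (fun u => ∑ j, lagBasis x j τ * (g u * (if u ≤ x j then 1 else 0))) volume (-1) 1 := by
    simpa only [sum_fn] using IntervalIntegrable.sum univ hs
  simp_rw [e]
  rw [intervalIntegral.integral_sub (intervalIntegrable_mul_ite hg τ) hs',
    intervalIntegral.integral_finsetSum hs, integral_mul_ite g hτ]
  simp_rw [intervalIntegral.integral_const_mul]
  have h1 : lagInterp x h τ = h (-1) * ∑ j, lagBasis x j τ +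
      ∑ j, lagBasis x j τ * ∫ u in (-1 : ℝ)..1, g u * (if u ≤ x j then 1 else 0) := by
    rw [lagInterp, mul_sum, ← sum_add_distrib]
    refine sum_congr rfl fun j _ => ?_
    rw [integral_mul_ite g (hmem j), hh _ (hmem j)]
    ring
  rw [h1, sum_lagBasis hx hn, hh τ hτ]
  ring

lemma integral_pow_mul_errorKernel {n : ℕ} {x : Fin n → ℝ} (hx : Function.Injective x)
    (hmem : ∀ i, x i ∈ Set.Icc (-1 : ℝ) 1) {τ : ℝ} (hτ : τ ∈ Set.Icc (-1 : ℝ) 1) {k : ℕ}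
    (hk : k + 1 < n) : ∫ u in (-1 : ℝ)..1, u ^ k * errorKernel x τ u = 0 := by
  rw [← sub_lagInterp_eq_integral (h := fun t => t ^ (k + 1) / (k + 1)) hx (by omega) hmem
    (Continuous.intervalIntegrable (by fun_prop) _ _) ?_ hτ]
  · unfold lagInterp
    simp_rw [div_mul_eq_mul_div]
    rw [← sum_div, sum_pow_mul_lagBasis hx hk, sub_self]
  · intro t _
    rw [integral_pow]
    ring

/-- **Wainerman's lemma**: the Peano kernel is dominated by a single Lagrange basis polynomial. -/
lemma exists_abs_errorKernel_le {n : ℕ} {x : Fin n → ℝ} (hx : Function.Injective x) (hn : 0 < n)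
    {τ : ℝ} (hτ : ∀ i, τ ≠ x i) (u : ℝ) : ∃ j, |errorKernel x τ u| ≤ |lagBasis x j τ| := by
  set X := univ.image x with hX
  set S := insert τ X with hS
  have hτX : τ ∉ X := by simpa [hX] using fun i => (hτ i).symm
  set T := S.filter (u ≤ ·) with hT
  set ω := ∏ i, (τ - x i) with hω
  have hω0 : ω ≠ 0 := prod_ne_zero_iff.2 fun i _ => sub_ne_zero.2 (hτ i)
  have hwτ : ω * baryWeight S τ = 1 := by
    rw [baryWeight, hS, erase_insert hτX, hX, prod_image hx.injOn, hω, ← prod_mul_distrib]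
    exact prod_eq_one fun i _ => mul_inv_cancel₀ (sub_ne_zero.2 (hτ i))
  have hwx : ∀ j, ω * baryWeight S (x j) = -lagBasis x j τ := by
    intro j
    have hne : τ ≠ x j := hτ j
    have hXj : X.erase (x j) = (univ.erase j).image x := by
      rw [hX, image_erase hx]
    rw [baryWeight, hS, erase_insert_of_ne hne, prod_insert (fun h => hτX (mem_of_mem_erase h)),
      hXj, prod_image hx.injOn, hω, ← mul_prod_erase univ _ (mem_univ j), lagBasis]
    simp_rw [div_eq_mul_inv]
    rw [prod_mul_distrib]
    have h1 : τ - x j ≠ 0 := sub_ne_zero.2 hne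
    have h2 : x j - τ ≠ 0 := sub_ne_zero.2 hne.symm
    have h3 : (τ - x j) * (x j - τ)⁻¹ = -1 := by
      rw [← neg_sub (x j) τ, neg_mul, mul_inv_cancel₀ h2]
    linear_combination (∏ i ∈ univ.erase j, (τ - x i)) * (∏ i ∈ univ.erase j, (x j - x i)⁻¹) * h3
  have hK : errorKernel x τ u = ω * indicatorDividedDiff T S := by
    rw [indicatorDividedDiff, hT, sum_filter, hS, sum_insert hτX, ← hS, mul_add, hX,
      sum_image hx.injOn, mul_sum, errorKernel, sub_eq_add_neg, ← sum_neg_distrib]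
    congr 1
    · split_ifs
      · exact hwτ.symm
      · simp
    · refine sum_congr rfl fun j _ => ?_
      split_ifs
      · rw [hwx, one_mul]
      · simp
  rcases T.eq_empty_or_nonempty with he | hTne
  · exact ⟨⟨0, hn⟩, by simp [hK, he, indicatorDividedDiff]⟩
  rcases (S \ T).eq_empty_or_nonempty with he | hne
  · have hE : T = S := subset_antisymm (filter_subset _ _) (sdiff_eq_empty_iff_subset.1 he)
    refine ⟨⟨0, hn⟩, ?_⟩
    rw [hK, hE, indicatorDividedDiff_self, mul_zero, abs_zero]
    · exact abs_nonneg _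
    · rw [hS, card_insert_of_notMem hτX, hX, card_image_of_injective _ hx, card_univ,
        Fintype.card_fin]
      omega
  · obtain ⟨y, hyS, hyτ, hy⟩ := exists_abs_indicatorDividedDiff_le (filter_subset _ _)
      (fun y hy z hz => by
        simp only [mem_sdiff, mem_filter, not_and, not_le] at hy hz
        exact (hz.2 hz.1).trans_le hy.2) hTne hne τ
    obtain ⟨j, _, rfl⟩ := mem_image.1 ((mem_insert.1 hyS).resolve_left hyτ)
    refine ⟨j, ?_⟩
    rw [hK, abs_mul, ← abs_neg (lagBasis x j τ), ← hwx, abs_mul]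
    exact mul_le_mul_of_nonneg_left hy (abs_nonneg _)

lemma abs_lagBasis_le_sSup {n : ℕ} (x : Fin n → ℝ) (j : Fin n) {t : ℝ}
    (ht : t ∈ Set.Icc (-1 : ℝ) 1) :
    |lagBasis x j t| ≤ sSup ((fun t => |lagBasis x j t|) '' Set.Icc (-1 : ℝ) 1) := by
  apply le_csSup
  · apply IsCompact.bddAbove_image isCompact_Icc
    unfold lagBasis
    fun_prop
  · exact ⟨t, ht, rfl⟩

theorem stmt16 {n r : ℕ} (hr : 1 ≤ r) (hn : r + 1 ≤ n)
    (x : Fin n → ℝ)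
    (hdec : ∀ i j : Fin n, i < j → x j < x i)
    (hmem : ∀ i, x i ∈ Set.Icc (-1 : ℝ) 1)
    (f g : ℝ → ℝ) (V : ℝ)
    (hf : ContDiff ℝ (r - 1) f)
    (hg : IntegrableOn g (Set.Icc (-1 : ℝ) 1))
    (hBV : BoundedVariationOn g (Set.Icc (-1 : ℝ) 1))
    (hV : (eVariationOn g (Set.Icc (-1 : ℝ) 1)).toReal = V)
    (hrep : ∀ t ∈ Set.Icc (-1 : ℝ) 1,
      iteratedDeriv (r - 1) f t = iteratedDeriv (r - 1) f (-1) + ∫ y in (-1 : ℝ)..t, g y) :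
    ∀ t ∈ Set.Icc (-1 : ℝ) 1,
      |f t - lagInterp x f t| ≤
        Real.pi ^ r * V / (∏ i ∈ Finset.range r, ((n : ℝ) - 1 - i)) *
          Finset.univ.sup' ⟨⟨0, by omega⟩, Finset.mem_univ _⟩
            (fun j => sSup ((fun t => |lagBasis x j t|) '' Set.Icc (-1 : ℝ) 1)) := by
  intro t ht
  obtain ⟨q, rfl⟩ : ∃ q, r = q + 1 := ⟨r - 1, by omega⟩
  obtain ⟨d, rfl⟩ : ∃ d, n = d + 2 := ⟨n - 2, by omega⟩
  set M := Finset.univ.sup' ⟨⟨0, by omega⟩, Finset.mem_univ _⟩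
    (fun j => sSup ((fun t => |lagBasis x j t|) '' Set.Icc (-1 : ℝ) 1)) with hMdef
  have hx : Function.Injective x := StrictAnti.injective fun i j hij => hdec i j hij
  have hMj : ∀ j, |lagBasis x j t| ≤ M := fun j =>
    (abs_lagBasis_le_sSup x j ht).trans
      (Finset.le_sup' (fun j => sSup ((fun t => |lagBasis x j t|) '' Set.Icc (-1 : ℝ) 1))
        (mem_univ j))
  have hM0 : 0 ≤ M := (abs_nonneg _).trans (hMj 0)
  have hV0 : 0 ≤ V := hV ▸ ENNReal.toReal_nonneg
  have hprod : Real.pi ^ (q + 1) * V / (∏ i ∈ range (q + 1), (((d + 2 : ℕ) : ℝ) - 1 - i)) * M =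
      (∏ i ∈ range (q + 1), Real.pi / ((d : ℝ) + 1 - i)) * M * V := by
    rw [prod_div_distrib, prod_const, card_range]
    have : ∀ i : ℕ, ((d + 2 : ℕ) : ℝ) - 1 - i = d + 1 - i := fun i => by push_cast; ring
    simp_rw [this]
    ring
  rw [hprod]
  by_cases hnode : ∃ i, t = x i
  · obtain ⟨i, rfl⟩ := hnode
    rw [lagInterp_node hx, sub_self, abs_zero]
    refine mul_nonneg (mul_nonneg (prod_nonneg fun i hi => ?_) hM0) hV0
    have : i < q + 1 := mem_range.1 hi
    have : (i : ℝ) ≤ d := by exact_mod_cast (by omega : i ≤ d)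
    exact div_nonneg Real.pi_pos.le (by linarith)
  · push Not at hnode
    have hle : (-1 : ℝ) ≤ 1 := by norm_num
    have hgi : IntervalIntegrable g volume (-1) 1 :=
      (intervalIntegrable_iff_integrableOn_Icc_of_le hle).2 hg
    have hf' : ContDiff ℝ q f := hf
    set G : ℕ → ℝ → ℝ := fun s => if s < q then iteratedDeriv (s + 1) f else g with hGdef
    have hGq : G q = g := by simp [hGdef]
    have hcont : ∀ s ≤ q, Continuous (iteratedDeriv s f) := fun s hs =>
      hf'.continuous_iteratedDeriv s (by exact_mod_cast hs)
    have hGi : ∀ s ≤ q, IntervalIntegrable (G s) volume (-1) 1 := by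
      intro s _
      simp only [hGdef]
      split_ifs with h
      · exact (hcont (s + 1) h).intervalIntegrable _ _
      · exact hgi
    have hstep : ∀ s ≤ q, ∀ t ∈ Set.Icc (-1 : ℝ) 1,
        iteratedDeriv s f t = iteratedDeriv s f (-1) + ∫ y in (-1 : ℝ)..t, G s y := by
      intro s hs t ht
      rcases hs.lt_or_eq with h | rfl
      · simp only [hGdef, if_pos h]
        rw [intervalIntegral.integral_eq_sub_of_hasDerivAt (f := iteratedDeriv s f)]
        · ring
        · intro y _
          rw [iteratedDeriv_succ]
          exact (hf'.differentiable_iteratedDeriv s (by exact_mod_cast h) y).hasDerivAt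
        · exact (hcont (s + 1) h).intervalIntegrable _ _
      · rw [hGq]
        exact hrep t ht
    have herr := sub_lagInterp_eq_integral hx (by omega) hmem (hGi 0 (Nat.zero_le q))
      (by simpa using hstep 0 (Nat.zero_le q)) ht
    rw [herr, ← hV, ← hGq]
    refine abs_integral_mul_le_of_chain (by omega) (intervalIntegrable_errorKernel x t)
      (fun u _ => ?_) (fun k hk => integral_pow_mul_errorKernel hx hmem ht (by omega)) hGi
      (fun s hs u hu => ?_) (hGq.symm ▸ hBV)
    · obtain ⟨j, hj⟩ := exists_abs_errorKernel_le hx (by omega) hnode u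
      exact hj.trans (hMj j)
    · have : G s = iteratedDeriv (s + 1) f := by simp [hGdef, hs]
      rw [this]
      exact hstep (s + 1) hs u hu
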